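/- There exists a universal constant C such that the following holds. Let a ∈ ℝ_{≥0}^n with ∑ a_i² = 1 and a_1 ≥ ... ≥ a_n, and let f_s(x) = 1{a·x > s}. Then for every t ≥ s ≥ 0 with E[f_t] > 0, we have I_1(f_s)/E[f_s] ≤ C·I_1(f_t)/E[f_t]. -/

import Mathlib

open Finset

noncomputable section
open scoped Classical

/-- The ±1 value associated to a Boolean bit. -/
def sgn1 (b : Bool) : ℝ := if b then 1 else -1

/-- Probability of an event under the uniform measure on `{-1,1}^n`. -/
def cubePr (n : ℕ) (P : (Fin n → Bool) → Prop) : ℝ :=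
  ((univ.filter P).card : ℝ) / 2 ^ n

/-- Expectation of a function under the uniform measure on `{-1,1}^n`. -/
def cubeE (n : ℕ) (f : (Fin n → Bool) → ℝ) : ℝ := (∑ x, f x) / 2 ^ n

/-- The linear form `a · x = ∑ aᵢ xᵢ` on `{-1,1}^n`. -/
def lin (n : ℕ) (a : Fin n → ℝ) (x : Fin n → Bool) : ℝ := ∑ i, a i * sgn1 (x i)

/-- The halfspace `1{a · x > t}` as a 0/1-valued function. -/
def halfspace (n : ℕ) (a : Fin n → ℝ) (t : ℝ) (x : Fin n → Bool) : ℝ :=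
  if t < lin n a x then 1 else 0

/-- The influence of coordinate `i` on `f`: the probability that flipping
coordinate `i` changes the value of `f`. -/
def infl (n : ℕ) (i : Fin n) (f : (Fin n → Bool) → ℝ) : ℝ :=
  cubePr n (fun x => f x ≠ f (Function.update x i (!x i)))

/-- The degree-1 Fourier coefficient `f̂({i}) = E[f(x)·xᵢ]`. -/
def fCoeff (n : ℕ) (f : (Fin n → Bool) → ℝ) (i : Fin n) : ℝ :=
  cubeE n (fun x => f x * sgn1 (x i))

/-- The degree-1 Fourier weight `W¹(f) = ∑ᵢ f̂({i})²`. -/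
def W1 (n : ℕ) (f : (Fin n → Bool) → ℝ) : ℝ := ∑ i, (fCoeff n f i) ^ 2


/-- Sum of `φ` over all signed sums of the list of weights. -/
def EL : List ℝ → (ℝ → ℝ) → ℝ
  | [], φ => φ 0
  | b :: l, φ => EL l (fun x => φ (b + x)) + EL l (fun x => φ (-b + x))

/-- Real-valued indicator of a proposition. -/
def ind (P : Prop) : ℝ := if P then 1 else 0

lemma ind_nonneg (P : Prop) : 0 ≤ ind P := by unfold ind; split_ifs <;> norm_num

lemma ind_le_one (P : Prop) : ind P ≤ 1 := by unfold ind; split_ifs <;> norm_num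

lemma ind_true {P : Prop} (h : P) : ind P = 1 := by simp [ind, h]

lemma ind_false {P : Prop} (h : ¬ P) : ind P = 0 := by simp [ind, h]

lemma ind_mono {P Q : Prop} (h : P → Q) : ind P ≤ ind Q := by
  by_cases hP : P
  · rw [ind_true hP, ind_true (h hP)]
  · rw [ind_false hP]; exact ind_nonneg Q

lemma EL_mono (l : List ℝ) : ∀ {φ ψ : ℝ → ℝ}, (∀ x, φ x ≤ ψ x) → EL l φ ≤ EL l ψ := by
  induction l with
  | nil => intro φ ψ h; exact h 0
  | cons b l ih =>
    intro φ ψ h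
    exact add_le_add (ih fun x => h _) (ih fun x => h _)

lemma EL_add (l : List ℝ) : ∀ (φ ψ : ℝ → ℝ), EL l (fun x => φ x + ψ x) = EL l φ + EL l ψ := by
  induction l with
  | nil => intro φ ψ; rfl
  | cons b l ih =>
    intro φ ψ
    simp only [EL]
    rw [ih (fun x => φ (b + x)) (fun x => ψ (b + x)),
      ih (fun x => φ (-b + x)) (fun x => ψ (-b + x))]
    ring

lemma EL_smul (l : List ℝ) : ∀ (c : ℝ) (φ : ℝ → ℝ), EL l (fun x => c * φ x) = c * EL l φ := by
  induction l with
  | nil => intro c φ; rfl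
  | cons b l ih =>
    intro c φ
    simp only [EL]
    rw [ih c (fun x => φ (b + x)), ih c (fun x => φ (-b + x))]
    ring

lemma EL_zero (l : List ℝ) : EL l (fun _ => 0) = 0 := by
  have := EL_smul l 0 (fun _ => 0)
  simpa using this

lemma EL_nonneg (l : List ℝ) {φ : ℝ → ℝ} (h : ∀ x, 0 ≤ φ x) : 0 ≤ EL l φ := by
  rw [← EL_zero l]; exact EL_mono l h

lemma EL_append (l₁ l₂ : List ℝ) : ∀ φ : ℝ → ℝ,
    EL (l₁ ++ l₂) φ = EL l₁ (fun x => EL l₂ (fun y => φ (x + y))) := by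
  induction l₁ with
  | nil => intro φ; simp [EL]
  | cons b l ih =>
    intro φ
    simp only [List.cons_append, EL]
    rw [ih, ih]
    simp only [add_assoc]

lemma EL_perm {l₁ l₂ : List ℝ} (h : l₁.Perm l₂) : ∀ φ : ℝ → ℝ, EL l₁ φ = EL l₂ φ := by
  induction h with
  | nil => intro φ; rfl
  | cons b _ ih => intro φ; simp only [EL]; rw [ih, ih]
  | swap b c l =>
    intro φ
    simp only [EL]
    simp only [← add_assoc]
    rw [add_comm b c, add_comm b (-c), add_comm (-b) c, add_comm (-b) (-c)]
    ring
  | trans _ _ ih1 ih2 => intro φ; rw [ih1, ih2]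

/-- Reflection at the first crossing of level `c`. -/
lemma reflection (β c : ℝ) (φ ψ : ℝ → ℝ) (hφ : ∀ x, 0 ≤ φ x) (hψ : ∀ x, 0 ≤ ψ x)
    (h : ∀ p x, c < p → p ≤ c + β → φ (p + x) ≤ ψ (-p + x)) (l : List ℝ) :
    (∀ b ∈ l, 0 ≤ b ∧ b ≤ β) → ∀ p, p ≤ c →
    EL l (fun x => φ (p + x) * ind (c < p + x)) ≤ EL l (fun x => ψ (-p + x)) := by
  induction l with
  | nil =>
    intro _ p hp
    simp only [EL]
    rw [ind_false (by linarith), mul_zero]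
    exact hψ _
  | cons b l ih =>
    intro hl p hp
    have hb := hl b (by simp)
    have ih' := ih (fun b' hb' => hl b' (by simp [hb']))
    simp only [EL]
    have h2 := ih' (p - b) (by linarith [hb.1])
    have h1 : EL l (fun x => φ (p + b + x) * ind (c < p + b + x))
        ≤ EL l (fun x => ψ (-(p + b) + x)) := by
      by_cases hc : p + b ≤ c
      · exact ih' (p + b) hc
      · push Not at hc
        apply EL_mono
        intro x
        refine le_trans ?_ (h (p + b) x hc (by linarith [hb.2]))
        exact mul_le_of_le_one_right (hφ _) (ind_le_one _)
    have e1 : ∀ x, p + (b + x) = p + b + x := fun x => by ring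
    have e2 : ∀ x, p + (-b + x) = p - b + x := fun x => by ring
    have e3 : ∀ x, -p + (b + x) = -(p - b) + x := fun x => by ring
    have e4 : ∀ x, -p + (-b + x) = -(p + b) + x := fun x => by ring
    simp only [e1, e2, e3, e4]
    linarith

/-- Prefix swapping of two independent copies. -/
lemma swapping (β r : ℝ) (F G : ℝ → ℝ → ℝ) (hG : ∀ x y, 0 ≤ G x y)
    (h0 : ∀ x y, y - x ≤ r → F x y = 0)
    (h : ∀ d x y, r < d → d ≤ r + 2 * β → F x y ≤ G (x + d) (y - d)) (l : List ℝ) :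
    (∀ b ∈ l, 0 ≤ b ∧ b ≤ β) → ∀ p q, q - p ≤ r →
    EL l (fun x => EL l (fun y => F (p + x) (q + y))) ≤
      EL l (fun x => EL l (fun y => G (q + x) (p + y))) := by
  induction l with
  | nil =>
    intro _ p q hp
    simp only [EL]
    rw [h0 _ _ (by linarith)]
    exact hG _ _
  | cons b l ih =>
    intro hl p q hp
    have hb := hl b (by simp)
    have ih' := ih (fun b' hb' => hl b' (by simp [hb']))
    have key : ∀ p' q', q' - p' ≤ r + 2 * β →
        EL l (fun x => EL l (fun y => F (p' + x) (q' + y))) ≤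
          EL l (fun x => EL l (fun y => G (q' + x) (p' + y))) := by
      intro p' q' hd
      by_cases hc : q' - p' ≤ r
      · exact ih' p' q' hc
      · push Not at hc
        apply EL_mono; intro x
        apply EL_mono; intro y
        have := h (q' - p') (p' + x) (q' + y) hc hd
        have e1 : p' + x + (q' - p') = q' + x := by ring
        have e2 : q' + y - (q' - p') = p' + y := by ring
        rwa [e1, e2] at this
    simp only [EL]
    simp only [EL_add]
    simp only [← add_assoc]
    have k1 := key (p + b) (q + b) (by linarith)
    have k2 := key (p + b) (q + -b) (by linarith)
    have k3 := key (p + -b) (q + b) (by linarith)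
    have k4 := key (p + -b) (q + -b) (by linarith)
    linarith

/-- Weighted double counting of single flips. -/
lemma flipping (φ ψ : ℝ → ℝ) (l : List ℝ) :
    (∀ b ∈ l, 0 ≤ b ∧ ∀ x, φ (x + 2 * b) ≤ ψ x) → ∀ p,
    EL l (fun x => (l.sum + x) * φ (p + x)) ≤ EL l (fun x => (l.sum - x) * ψ (p + x)) := by
  induction l with
  | nil => intro _ p; simp [EL]
  | cons b l ih =>
    intro hl p
    have hb := hl b (by simp)
    have ih' := ih (fun b' hb' => hl b' (by simp [hb']))
    simp only [EL, List.sum_cons]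
    have h1 := ih' (p + b)
    have h2 := ih' (p + -b)
    have h3 : EL l (fun x => 2 * b * φ (p + b + x)) ≤ EL l (fun x => 2 * b * ψ (p + -b + x)) := by
      apply EL_mono; intro x
      apply mul_le_mul_of_nonneg_left _ (by linarith [hb.1])
      have := hb.2 (p + -b + x)
      have e : p + -b + x + 2 * b = p + b + x := by ring
      rwa [e] at this
    have e1 : (fun x => (b + l.sum + (b + x)) * φ (p + (b + x))) =
        fun x => (l.sum + x) * φ (p + b + x) + 2 * b * φ (p + b + x) := by
      funext x; rw [← add_assoc p]; ring
    have e2 : (fun x => (b + l.sum + (-b + x)) * φ (p + (-b + x))) =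
        fun x => (l.sum + x) * φ (p + -b + x) := by
      funext x; rw [← add_assoc p]; ring
    have e3 : (fun x => (b + l.sum - (b + x)) * ψ (p + (b + x))) =
        fun x => (l.sum - x) * ψ (p + b + x) := by
      funext x; rw [← add_assoc p]; ring
    have e4 : (fun x => (b + l.sum - (-b + x)) * ψ (p + (-b + x))) =
        fun x => (l.sum - x) * ψ (p + -b + x) + 2 * b * ψ (p + -b + x) := by
      funext x; rw [← add_assoc p]; ring
    rw [e1, e2, e3, e4, EL_add, EL_add]
    linarith

/-- Large weights: comparison of adjacent windows. -/
lemma large_window (a u : ℝ) (ha : 0 < a) (hu : -a ≤ u) (l : List ℝ)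
    (hl : ∀ b ∈ l, a / 2 < b ∧ b ≤ a) :
    EL l (fun x => ind (u + a < x ∧ x ≤ u + 2 * a)) ≤
      5 * EL l (fun x => ind (u - a < x ∧ x ≤ u + a)) := by
  rcases l with _ | ⟨b, l'⟩
  · simp only [EL]
    rw [ind_false (by rintro ⟨h, _⟩; linarith)]
    have := ind_nonneg (u - a < 0 ∧ 0 ≤ u + a)
    linarith
  have hA : a / 2 < (b :: l').sum := by
    have h1 := (hl b (by simp)).1
    have h2 : 0 ≤ l'.sum := List.sum_nonneg (fun x hx => by
      have := (hl x (by simp [hx])).1; linarith)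
    rw [List.sum_cons]; linarith
  generalize b :: l' = l at *
  have key := flipping (fun x => ind (u + a < x ∧ x ≤ u + 2 * a))
    (fun x => ind (u - a < x ∧ x ≤ u + a)) l (fun b hb => ⟨by linarith [(hl b hb).1], fun x => by
      apply ind_mono
      rintro ⟨h1, h2⟩
      have := hl b hb
      constructor <;> linarith⟩) 0
  simp only [zero_add] at key
  have h1 : l.sum * EL l (fun x => ind (u + a < x ∧ x ≤ u + 2 * a)) ≤
      EL l (fun x => (l.sum + x) * ind (u + a < x ∧ x ≤ u + 2 * a)) := by
    rw [← EL_smul]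
    apply EL_mono; intro x
    by_cases hx : u + a < x ∧ x ≤ u + 2 * a
    · rw [ind_true hx]; linarith [hx.1]
    · rw [ind_false hx]; simp
  have h2 : EL l (fun x => (l.sum - x) * ind (u - a < x ∧ x ≤ u + a)) ≤
      (5 * l.sum) * EL l (fun x => ind (u - a < x ∧ x ≤ u + a)) := by
    rw [← EL_smul]
    apply EL_mono; intro x
    by_cases hx : u - a < x ∧ x ≤ u + a
    · rw [ind_true hx]; linarith [hx.1]
    · rw [ind_false hx]; simp
  have h3 : 0 < l.sum := by linarith
  refine le_of_mul_le_mul_left ?_ h3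
  linarith

/-- Comparison of adjacent windows, general weights. -/
lemma window (a u : ℝ) (ha : 0 < a) (hu : 0 ≤ u) (l : List ℝ)
    (hl : ∀ b ∈ l, 0 ≤ b ∧ b ≤ a) :
    EL l (fun x => ind (u + a < x ∧ x ≤ u + 2 * a)) ≤
      6 * EL l (fun x => ind (u - a < x ∧ x ≤ u + a)) := by
  have hp := (List.filter_append_perm (fun b : ℝ => decide (b ≤ a / 2)) l).symm
  rw [EL_perm hp, EL_perm hp, EL_append, EL_append]
  set S := List.filter (fun b : ℝ => decide (b ≤ a / 2)) l with hS
  set L := List.filter (fun b : ℝ => !decide (b ≤ a / 2)) l with hL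
  have hSm : ∀ b ∈ S, 0 ≤ b ∧ b ≤ a / 2 := by
    intro b hb
    rw [hS, List.mem_filter] at hb
    exact ⟨(hl b hb.1).1, by simpa using hb.2⟩
  have hLm : ∀ b ∈ L, a / 2 < b ∧ b ≤ a := by
    intro b hb
    rw [hL, List.mem_filter] at hb
    exact ⟨by simpa using hb.2, (hl b hb.1).2⟩
  set Φ : ℝ → ℝ := fun x => EL L (fun y => ind (u + a < x + y ∧ x + y ≤ u + 2 * a)) with hΦ
  set Ψ : ℝ → ℝ := fun x => EL L (fun y => ind (u - a < x + y ∧ x + y ≤ u + a)) with hΨ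
  have hΦ0 : ∀ x, 0 ≤ Φ x := fun x => EL_nonneg L fun y => ind_nonneg _
  have hΨ0 : ∀ x, 0 ≤ Ψ x := fun x => EL_nonneg L fun y => ind_nonneg _
  have r := reflection (a / 2) (a / 2) Φ Ψ hΦ0 hΨ0 (by
    intro p x h1 h2
    apply EL_mono; intro y
    apply ind_mono
    rintro ⟨h3, h4⟩
    constructor <;> linarith) S hSm 0 (by linarith)
  simp only [zero_add, neg_zero] at r
  have hpt : ∀ x, Φ x ≤ Φ x * ind (a / 2 < x) + 5 * Ψ x := by
    intro x
    by_cases hx : a / 2 < x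
    · rw [ind_true hx]; linarith [hΨ0 x]
    · rw [ind_false hx, mul_zero, zero_add]
      push Not at hx
      have := large_window a (u - x) ha (by linarith) L hLm
      have e1 : (fun y => ind (u - x + a < y ∧ y ≤ u - x + 2 * a)) =
          fun y => ind (u + a < x + y ∧ x + y ≤ u + 2 * a) := by
        funext y; congr 1; apply propext
        constructor <;> (rintro ⟨h1, h2⟩; constructor <;> linarith)
      have e2 : (fun y => ind (u - x - a < y ∧ y ≤ u - x + a)) =
          fun y => ind (u - a < x + y ∧ x + y ≤ u + a) := by
        funext y; congr 1; apply propext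
        constructor <;> (rintro ⟨h1, h2⟩; constructor <;> linarith)
      rw [e1, e2] at this
      exact this
  have h1 := EL_mono S hpt
  rw [EL_add, EL_smul] at h1
  linarith

lemma EL_split (l : List ℝ) (p q r : ℝ) (h1 : p ≤ q) (h2 : q ≤ r) :
    EL l (fun x => ind (p < x ∧ x ≤ r)) =
      EL l (fun x => ind (p < x ∧ x ≤ q)) + EL l (fun x => ind (q < x ∧ x ≤ r)) := by
  rw [← EL_add]
  congr 1; funext x
  unfold ind
  split_ifs <;> grind

lemma EL_split' (l : List ℝ) (p q : ℝ) (h1 : p ≤ q) :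
    EL l (fun x => ind (p < x)) =
      EL l (fun x => ind (p < x ∧ x ≤ q)) + EL l (fun x => ind (q < x)) := by
  rw [← EL_add]
  congr 1; funext x
  unfold ind
  split_ifs <;> grind

lemma window2 (a t : ℝ) (ha : 0 < a) (ht : 0 ≤ t) (l : List ℝ)
    (hl : ∀ b ∈ l, 0 ≤ b ∧ b ≤ a) :
    EL l (fun x => ind (t - a < x ∧ x ≤ t + 3 * a)) ≤
      49 * EL l (fun x => ind (t - a < x ∧ x ≤ t + a)) := by
  have h1 := window a t ha ht l hl
  have h2 := window a (t + a) ha (by linarith) l hl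
  rw [show t + a + a = t + 2 * a by ring, show t + a + 2 * a = t + 3 * a by ring,
    show t + a - a = t by ring] at h2
  have s1 := EL_split l (t - a) (t + a) (t + 3 * a) (by linarith) (by linarith)
  have s2 := EL_split l (t + a) (t + 2 * a) (t + 3 * a) (by linarith) (by linarith)
  have s3 := EL_split l (t - a) (t + a) (t + 2 * a) (by linarith) (by linarith)
  have s4 := EL_split l (t - a) t (t + 2 * a) (by linarith) (by linarith)
  have s5 := EL_nonneg l (fun x => ind_nonneg (t - a < x ∧ x ≤ t))
  linarith

lemma EL_prod (l : List ℝ) (φ ψ : ℝ → ℝ) :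
    EL l (fun x => EL l (fun y => φ x * ψ y)) = EL l φ * EL l ψ := by
  simp only [EL_smul]
  rw [mul_comm, ← EL_smul]
  simp only [mul_comm]

lemma swap_ineq (a s t : ℝ) (hst : s ≤ t) (l : List ℝ)
    (hl : ∀ b ∈ l, 0 ≤ b ∧ b ≤ a) :
    EL l (fun x => ind (s - a < x ∧ x ≤ s + a)) * EL l (fun x => ind (t + a < x)) ≤
      EL l (fun x => ind (t - a < x ∧ x ≤ t + 3 * a)) * EL l (fun x => ind (s - a < x)) := by
  have := swapping a (t - s)
    (fun x y => ind (s - a < x ∧ x ≤ s + a) * ind (t + a < y))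
    (fun x y => ind (t - a < x ∧ x ≤ t + 3 * a) * ind (s - a < y))
    (fun x y => mul_nonneg (ind_nonneg _) (ind_nonneg _))
    (by
      intro x y hxy
      by_cases h1 : s - a < x ∧ x ≤ s + a
      · rw [ind_false (P := t + a < y) (by linarith [h1.2]), mul_zero]
      · rw [ind_false h1, zero_mul])
    (by
      intro d x y h1 h2
      by_cases h3 : s - a < x ∧ x ≤ s + a
      · by_cases h4 : t + a < y
        · rw [ind_true h3, ind_true h4, ind_true (P := t - a < x + d ∧ x + d ≤ t + 3 * a)
            ⟨by linarith [h3.1], by linarith [h3.2]⟩, ind_true (P := s - a < y - d) (by linarith)]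
        · rw [ind_false h4, mul_zero]
          exact mul_nonneg (ind_nonneg _) (ind_nonneg _)
      · rw [ind_false h3, zero_mul]
        exact mul_nonneg (ind_nonneg _) (ind_nonneg _))
    l hl 0 0 (by linarith)
  simp only [zero_add] at this
  rwa [EL_prod, EL_prod] at this

lemma sum_cube_succ (n : ℕ) (F : (Fin (n + 1) → Bool) → ℝ) :
    ∑ x, F x = ∑ x : Fin n → Bool, F (Fin.cons true x) +
      ∑ x : Fin n → Bool, F (Fin.cons false x) := by
  rw [← Equiv.sum_comp (Fin.consEquiv (fun _ : Fin (n + 1) => Bool)) F, Fintype.sum_prod_type,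
    Fintype.sum_bool]
  rfl

lemma lin_cons (n : ℕ) (a : Fin (n + 1) → ℝ) (b : Bool) (x : Fin n → Bool) :
    lin (n + 1) a (Fin.cons b x) = a 0 * sgn1 b + lin n (fun i => a i.succ) x := by
  simp [lin, Fin.sum_univ_succ]

lemma sum_EL (n : ℕ) : ∀ (a : Fin n → ℝ) (g : ℝ → ℝ),
    ∑ x, g (lin n a x) = EL (List.ofFn a) g := by
  induction n with
  | zero => intro a g; simp [lin, EL]
  | succ n ih =>
    intro a g
    rw [sum_cube_succ, List.ofFn_succ]
    simp only [EL, lin_cons]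
    rw [← ih, ← ih]
    simp [sgn1]

lemma sum_halfspace (n : ℕ) (a : Fin (n + 1) → ℝ) (s : ℝ) :
    cubeE (n + 1) (halfspace (n + 1) a s) =
      (EL (List.ofFn fun i : Fin n => a i.succ) (fun x => ind (s - a 0 < x)) +
       EL (List.ofFn fun i : Fin n => a i.succ) (fun x => ind (s + a 0 < x))) / 2 ^ (n + 1) := by
  unfold cubeE
  congr 1
  rw [sum_cube_succ, ← sum_EL, ← sum_EL]
  congr 1 <;>
  · apply Finset.sum_congr rfl
    intro x _
    unfold halfspace ind
    rw [lin_cons]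
    simp only [sgn1]
    split_ifs <;> grind

lemma sum_infl (n : ℕ) (a : Fin (n + 1) → ℝ) (ha : 0 ≤ a 0) (s : ℝ) :
    infl (n + 1) 0 (halfspace (n + 1) a s) =
      (2 * EL (List.ofFn fun i : Fin n => a i.succ)
        (fun x => ind (s - a 0 < x ∧ x ≤ s + a 0))) / 2 ^ (n + 1) := by
  unfold infl cubePr
  congr 1
  rw [Finset.card_filter]
  push_cast
  rw [sum_cube_succ, ← sum_EL, two_mul]
  congr 1 <;>
  · apply Finset.sum_congr rfl
    intro x _
    unfold halfspace ind
    simp only [Fin.cons_zero, Fin.update_cons_zero]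
    rw [lin_cons, lin_cons]
    simp only [sgn1]
    split_ifs <;> grind

/-- **The normalized first influence is increasing up to a constant.** There is a
universal `C` such that for `a₁ ≥ ... ≥ aₙ ≥ 0` with `∑ aᵢ² = 1` and halfspaces
`f_s = 1{a·x > s}`: for all `t ≥ s ≥ 0` with `E[f_t] > 0`,
`I₁(f_s)/E[f_s] ≤ C·I₁(f_t)/E[f_t]`. -/
theorem relative_influence_increase :
    ∃ C : ℝ, 0 < C ∧ ∀ (n : ℕ) (hn : 0 < n) (a : Fin n → ℝ),
      (∀ i, 0 ≤ a i) → (∀ i j : Fin n, i ≤ j → a j ≤ a i) →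
      (∑ i, (a i) ^ 2) = 1 →
      ∀ s t : ℝ, 0 ≤ s → s ≤ t → 0 < cubeE n (halfspace n a t) →
        infl n ⟨0, hn⟩ (halfspace n a s) / cubeE n (halfspace n a s) ≤
          C * (infl n ⟨0, hn⟩ (halfspace n a t) / cubeE n (halfspace n a t)) := by
  refine ⟨200, by norm_num, ?_⟩
  intro n hn a hpos hanti hsum s t hs hst hE
  obtain ⟨n, rfl⟩ : ∃ m, n = m + 1 := ⟨n - 1, by omega⟩
  have h0 : (⟨0, hn⟩ : Fin (n + 1)) = 0 := rfl
  rw [h0]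
  have ha : 0 < a 0 := by
    rcases (hpos 0).lt_or_eq with h | h
    · exact h
    · exfalso
      have : ∀ i, a i = 0 := fun i =>
        le_antisymm (by rw [h]; exact hanti 0 i (Fin.zero_le i)) (hpos i)
      simp [this] at hsum
  rw [sum_halfspace] at hE
  rw [sum_halfspace, sum_halfspace, sum_infl _ _ ha.le, sum_infl _ _ ha.le]
  have h2n : (0 : ℝ) < 2 ^ (n + 1) := by positivity
  rw [div_div_div_cancel_right₀ h2n.ne', div_div_div_cancel_right₀ h2n.ne']
  have hl : ∀ b ∈ (List.ofFn fun i : Fin n => a i.succ), 0 ≤ b ∧ b ≤ a 0 := by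
    intro b hb
    rw [List.mem_ofFn] at hb
    obtain ⟨i, rfl⟩ := hb
    exact ⟨hpos _, hanti 0 _ (Fin.zero_le _)⟩
  generalize (List.ofFn fun i : Fin n => a i.succ) = l at *
  generalize a 0 = α at *
  have w := window2 α t ha (hs.trans hst) l hl
  have sw := swap_ineq α s t hst l hl
  have ss := EL_split' l (s - α) (s + α) (by linarith)
  have st := EL_split' l (t - α) (t + α) (by linarith)
  have m1 : EL l (fun x => ind (t - α < x)) ≤ EL l (fun x => ind (s - α < x)) :=
    EL_mono l fun x => ind_mono fun h => by linarith
  have n1 := EL_nonneg l (fun x => ind_nonneg (s + α < x))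
  have n2 := EL_nonneg l (fun x => ind_nonneg (t + α < x))
  have n3 := EL_nonneg l (fun x => ind_nonneg (s - α < x ∧ x ≤ s + α))
  have n4 := EL_nonneg l (fun x => ind_nonneg (t - α < x ∧ x ≤ t + α))
  rw [lt_div_iff₀ h2n, zero_mul] at hE
  generalize EL l (fun x => ind (s - α < x)) = Gs at *
  generalize EL l (fun x => ind (t - α < x)) = Gt at *
  generalize EL l (fun x => ind (s + α < x)) = Gs' at *
  generalize EL l (fun x => ind (t + α < x)) = Gt' at *
  generalize EL l (fun x => ind (s - α < x ∧ x ≤ s + α)) = Is at *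
  generalize EL l (fun x => ind (t - α < x ∧ x ≤ t + α)) = It at *
  have hGt : 0 < Gt := by linarith
  have hGs : 0 < Gs := by linarith
  rw [← mul_div_assoc, div_le_div_iff₀ (by linarith) hE]
  by_cases hc : Gt' ≤ It
  · have e1 : 2 * Is * (Gt + Gt') ≤ 2 * Gs * (3 * It) :=
      mul_le_mul (by linarith) (by linarith) hE.le (by linarith)
    have e2 : 0 ≤ It * Gs := mul_nonneg n4 hGs.le
    have e3 : 0 ≤ It * Gs' := mul_nonneg n4 n1
    nlinarith
  · push Not at hc
    have e0 : Is * Gt' ≤ 49 * It * Gs := sw.trans (mul_le_mul_of_nonneg_right w hGs.le)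
    have e1 : Is * (Gt + Gt') ≤ Is * (3 * Gt') := mul_le_mul_of_nonneg_left (by linarith) n3
    have e2 : 0 ≤ It * Gs := mul_nonneg n4 hGs.le
    have e3 : 0 ≤ It * Gs' := mul_nonneg n4 n1
    nlinarith

end
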